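/- Let k be a field, X a finite-dimensional k-vector space, and γ : X → X a linear map such that both γ and γ − id_X are invertible. Consider the sextuple Δ_γ in X × X × X given by I₁ = {(x, −γx, 0) : x ∈ X}, C₁ = X×X×0, I₂ = {(0, x, x) : x ∈ X}, C₂ = 0×X×X, I₃ = {(x, 0, x) : x ∈ X}, C₃ = X×0×X. Then Δ_γ is isomorphic to the framed sextuple S_η with η = γ ∘ (γ − id_X)⁻¹, i.e. there is a linear automorphism of X × X × X carrying each of the six subspaces of Δ_γ onto the corresponding subspace of S_η. -/

import Mathlib

section Sextuples

variable {k X : Type*} [Field k] [AddCommGroup X] [Module k X]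

/-- `I₁ = {(x, −γx, 0)}` of the sextuple `Δ_γ`. -/
def dI1 (γ : X →ₗ[k] X) : Submodule k (X × X × X) :=
  LinearMap.range ((LinearMap.id : X →ₗ[k] X).prod ((-γ).prod (0 : X →ₗ[k] X)))

/-- `C₁ = X × X × 0` of the sextuple `Δ_γ`. -/
def dC1 : Submodule k (X × X × X) :=
  (⊤ : Submodule k X).prod ((⊤ : Submodule k X).prod (⊥ : Submodule k X))

/-- `I₂ = {(0, x, x)}` of the sextuple `Δ_γ`. -/
def dI2 : Submodule k (X × X × X) :=
  LinearMap.range ((0 : X →ₗ[k] X).prod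
    ((LinearMap.id : X →ₗ[k] X).prod (LinearMap.id : X →ₗ[k] X)))

/-- `C₂ = 0 × X × X` of the sextuple `Δ_γ`. -/
def dC2 : Submodule k (X × X × X) :=
  (⊥ : Submodule k X).prod ((⊤ : Submodule k X).prod (⊤ : Submodule k X))

/-- `I₃ = {(x, 0, x)}` of the sextuple `Δ_γ`. -/
def dI3 : Submodule k (X × X × X) :=
  LinearMap.range ((LinearMap.id : X →ₗ[k] X).prod
    ((0 : X →ₗ[k] X).prod (LinearMap.id : X →ₗ[k] X)))

/-- `C₃ = X × 0 × X` of the sextuple `Δ_γ`. -/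
def dC3 : Submodule k (X × X × X) :=
  (⊤ : Submodule k X).prod ((⊥ : Submodule k X).prod (⊤ : Submodule k X))

/-- `I₁ = X × 0 × 0` of the framed sextuple `S_η`. -/
def sI1 : Submodule k (X × X × X) :=
  (⊤ : Submodule k X).prod ((⊥ : Submodule k X).prod (⊥ : Submodule k X))

/-- `C₁ = X × X × 0` of the framed sextuple `S_η`. -/
def sC1 : Submodule k (X × X × X) :=
  (⊤ : Submodule k X).prod ((⊤ : Submodule k X).prod (⊥ : Submodule k X))

/-- `I₂ = 0 × 0 × X` of the framed sextuple `S_η`. -/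
def sI2 : Submodule k (X × X × X) :=
  (⊥ : Submodule k X).prod ((⊥ : Submodule k X).prod (⊤ : Submodule k X))

/-- `C₂ = 0 × X × X` of the framed sextuple `S_η`. -/
def sC2 : Submodule k (X × X × X) :=
  (⊥ : Submodule k X).prod ((⊤ : Submodule k X).prod (⊤ : Submodule k X))

/-- `I₃ = {(−ηx, x, −x)}` of the framed sextuple `S_η`. -/
def sI3 (η : X →ₗ[k] X) : Submodule k (X × X × X) :=
  LinearMap.range ((-η).prod
    ((LinearMap.id : X →ₗ[k] X).prod (-(LinearMap.id : X →ₗ[k] X))))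

/-- `C₃ = {(y − ηx, x − y, −x)}` of the framed sextuple `S_η`. -/
def sC3 (η : X →ₗ[k] X) : Submodule k (X × X × X) :=
  LinearMap.range ((LinearMap.snd k X X - η ∘ₗ LinearMap.fst k X X).prod
    ((LinearMap.fst k X X - LinearMap.snd k X X).prod (-(LinearMap.fst k X X))))

end Sextuples

/-!
The `Iᵢ` are ranges and the `Cᵢ` are kernels; in particular `C₃` of `S_η` is the kernel of
`(p, q, r) ↦ p + q + (r - ηr)`. With `δ = γ - id`, the automorphism
`(a, b, c) ↦ (γa, c - γa - b, δc)` intertwines the maps defining the two sextuples up to one of the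
bijections `γ`, `δ`, `-δ`, `-id`, so it carries ranges onto ranges and kernels onto kernels. The
relation `ηδ = γ` is what makes this work for `i = 3`.
-/

section Intertwining

variable {R U U' V W : Type*} [Semiring R]
  [AddCommMonoid U] [Module R U] [AddCommMonoid U'] [Module R U']
  [AddCommMonoid V] [Module R V] [AddCommMonoid W] [Module R W]

theorem map_range_eq_range_of_comp_eq {g : V →ₗ[R] W} {f : U →ₗ[R] V} {f' : U' →ₗ[R] W}
    (u : U →ₗ[R] U') (hu : Function.Surjective u) (h : g ∘ₗ f = f' ∘ₗ u) :
    (LinearMap.range f).map g = LinearMap.range f' := by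
  rw [← LinearMap.range_comp, h,
    LinearMap.range_comp_of_range_eq_top f' (LinearMap.range_eq_top.2 hu)]

theorem map_ker_eq_ker_of_comp_eq {g : V →ₗ[R] W} {p : V →ₗ[R] U} {p' : W →ₗ[R] U'}
    (hg : Function.Surjective g) (u : U →ₗ[R] U') (hu : Function.Injective u)
    (h : p' ∘ₗ g = u ∘ₗ p) :
    (LinearMap.ker p).map g = LinearMap.ker p' := by
  have comap_ker : (LinearMap.ker p').comap g = LinearMap.ker p := by
    ext v
    have hv : p' (g v) = u (p v) := LinearMap.congr_fun h v
    simp [hv, map_eq_zero_iff u hu]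
  rw [← comap_ker, Submodule.map_comap_eq_of_surjective hg]

end Intertwining

section FramingEquiv

variable {R X : Type*} [Ring R] [AddCommGroup X] [Module R X]

/-- The automorphism `(a, b, c) ↦ (αa, c - αa - b, δc)` of `X × X × X`; for `α = γ` and
`δ = γ - id` it is the isomorphism from `Δ_γ` to `S_η`. -/
def framingEquiv (α δ : X ≃ₗ[R] X) : (X × X × X) ≃ₗ[R] (X × X × X) where
  toFun v := (α v.1, v.2.2 - α v.1 - v.2.1, δ v.2.2)
  map_add' v w := by ext <;> simp; abel
  map_smul' r v := by ext <;> simp [smul_sub]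
  invFun w := (α.symm w.1, δ.symm w.2.2 - w.1 - w.2.1, δ.symm w.2.2)
  left_inv v := by ext <;> simp
  right_inv w := by ext <;> simp

@[simp]
theorem framingEquiv_apply (α δ : X ≃ₗ[R] X) (v : X × X × X) :
    framingEquiv α δ v = (α v.1, v.2.2 - α v.1 - v.2.1, δ v.2.2) :=
  rfl

end FramingEquiv

section RangesAndKernels

variable {k X : Type*} [Field k] [AddCommGroup X] [Module k X]

theorem sI1_eq_range :
    (sI1 : Submodule k (X × X × X)) = LinearMap.range (LinearMap.inl k X (X × X)) := by
  ext ⟨p, q, r⟩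
  simp [sI1, eq_comm]

theorem sI2_eq_range :
    (sI2 : Submodule k (X × X × X)) =
      LinearMap.range (LinearMap.inr k X (X × X) ∘ₗ LinearMap.inr k X X) := by
  ext ⟨p, q, r⟩
  simp [sI2, eq_comm]

theorem dC1_eq_ker :
    (dC1 : Submodule k (X × X × X)) =
      LinearMap.ker (LinearMap.snd k X X ∘ₗ LinearMap.snd k X (X × X)) := by
  ext ⟨a, b, c⟩
  simp [dC1]

theorem dC2_eq_ker :
    (dC2 : Submodule k (X × X × X)) = LinearMap.ker (LinearMap.fst k X (X × X)) := by
  ext ⟨a, b, c⟩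
  simp [dC2]

theorem dC3_eq_ker :
    (dC3 : Submodule k (X × X × X)) =
      LinearMap.ker (LinearMap.fst k X X ∘ₗ LinearMap.snd k X (X × X)) := by
  ext ⟨a, b, c⟩
  simp [dC3]

theorem sC1_eq_ker :
    (sC1 : Submodule k (X × X × X)) =
      LinearMap.ker (LinearMap.snd k X X ∘ₗ LinearMap.snd k X (X × X)) :=
  dC1_eq_ker

theorem sC2_eq_ker :
    (sC2 : Submodule k (X × X × X)) = LinearMap.ker (LinearMap.fst k X (X × X)) :=
  dC2_eq_ker

theorem sC3_eq_ker (η : X →ₗ[k] X) :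
    sC3 η =
      LinearMap.ker (LinearMap.id.coprod (LinearMap.id.coprod (LinearMap.id - η))) := by
  ext ⟨p, q, r⟩
  constructor
  · rintro ⟨⟨x, y⟩, h⟩
    obtain ⟨rfl, rfl, rfl⟩ : y - η x = p ∧ x - y = q ∧ -x = r := by simpa using h
    change y - η x + (x - y + (-x - η (-x))) = 0
    rw [map_neg]
    abel
  · intro h
    have hpqr : p + (q + (r - η r)) = 0 := by simpa using h
    obtain rfl : p = -(q + (r - η r)) := eq_neg_of_add_eq_zero_left hpqr
    refine ⟨(-r, -r - q), Prod.ext ?_ (Prod.ext (sub_sub_self (-r) q) (neg_neg r))⟩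
    change -r - q - η (-r) = -(q + (r - η r))
    rw [map_neg]
    abel

end RangesAndKernels

theorem delta_gamma_isomorphic_to_framed_sextuple_general
    {k X : Type*} [Field k] [AddCommGroup X] [Module k X]
    (γ : X →ₗ[k] X) (hγ : Function.Bijective γ)
    (hγ1 : Function.Bijective (γ - (LinearMap.id : X →ₗ[k] X)))
    (η : X →ₗ[k] X) (hη : η ∘ₗ (γ - (LinearMap.id : X →ₗ[k] X)) = γ) :
    ∃ g : (X × X × X) ≃ₗ[k] (X × X × X),
      (dI1 γ).map g.toLinearMap = sI1 ∧
      (dC1 : Submodule k (X × X × X)).map g.toLinearMap = sC1 ∧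
      (dI2 : Submodule k (X × X × X)).map g.toLinearMap = sI2 ∧
      (dC2 : Submodule k (X × X × X)).map g.toLinearMap = sC2 ∧
      (dI3 : Submodule k (X × X × X)).map g.toLinearMap = sI3 η ∧
      (dC3 : Submodule k (X × X × X)).map g.toLinearMap = sC3 η := by
  have η_δ (x : X) : η (γ x) - η x = γ x := by simpa using LinearMap.congr_fun hη x
  let g := framingEquiv (.ofBijective γ hγ) (.ofBijective (γ - LinearMap.id) hγ1)
  have C₃_intertwined : (LinearMap.id.coprod (LinearMap.id.coprod (LinearMap.id - η))) ∘ₗ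
      g.toLinearMap = (-LinearMap.id) ∘ₗ (LinearMap.fst k X X ∘ₗ LinearMap.snd k X (X × X)) := by
    refine LinearMap.ext fun ⟨a, b, c⟩ => ?_
    change γ a + (c - γ a - b + (γ c - c - η (γ c - c))) = -b
    rw [map_sub, η_δ]
    abel
  rw [sI1_eq_range, sI2_eq_range, dC1_eq_ker, dC2_eq_ker, dC3_eq_ker, sC1_eq_ker, sC2_eq_ker,
    sC3_eq_ker]
  refine ⟨g, map_range_eq_range_of_comp_eq γ hγ.surjective ?_,
    map_ker_eq_ker_of_comp_eq g.surjective (γ - LinearMap.id) hγ1.injective ?_,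
    map_range_eq_range_of_comp_eq (γ - LinearMap.id) hγ1.surjective ?_,
    map_ker_eq_ker_of_comp_eq g.surjective γ hγ.injective ?_,
    map_range_eq_range_of_comp_eq (-(γ - LinearMap.id)) (neg_surjective.comp hγ1.surjective) ?_,
    map_ker_eq_ker_of_comp_eq g.surjective (-LinearMap.id) neg_injective C₃_intertwined⟩
  all_goals exact LinearMap.ext fun v => by simp [g, η_δ]

/-- Let `γ : X → X` be linear with `γ` and `γ − id` invertible.  Then
the continuous-type normal-form sextuple `Δ_γ` is isomorphic to the framed sextuple
`S_η` where `η = γ ∘ (γ − id)⁻¹` (expressed by `η ∘ (γ − id) = γ`): some linear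
automorphism of `X × X × X` carries each of the six subspaces of `Δ_γ` onto the
corresponding subspace of `S_η`. -/
theorem delta_gamma_isomorphic_to_framed_sextuple
    {k X : Type*} [Field k] [AddCommGroup X] [Module k X] [FiniteDimensional k X]
    (γ : X →ₗ[k] X) (hγ : Function.Bijective γ)
    (hγ1 : Function.Bijective (γ - (LinearMap.id : X →ₗ[k] X)))
    (η : X →ₗ[k] X) (hη : η ∘ₗ (γ - (LinearMap.id : X →ₗ[k] X)) = γ) :
    ∃ g : (X × X × X) ≃ₗ[k] (X × X × X),
      (dI1 γ).map g.toLinearMap = sI1 ∧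
      (dC1 : Submodule k (X × X × X)).map g.toLinearMap = sC1 ∧
      (dI2 : Submodule k (X × X × X)).map g.toLinearMap = sI2 ∧
      (dC2 : Submodule k (X × X × X)).map g.toLinearMap = sC2 ∧
      (dI3 : Submodule k (X × X × X)).map g.toLinearMap = sI3 η ∧
      (dC3 : Submodule k (X × X × X)).map g.toLinearMap = sC3 η :=
  delta_gamma_isomorphic_to_framed_sextuple_general γ hγ hγ1 η hη
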